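/- Let d ≥ 1, let x_1, …, x_{d+1} ∈ ℝ^d be affinely independent, and let τ be their closed convex hull with Lebesgue measure |τ| > 0. Then for every affine function g : ℝ^d → ℝ and every vertex x_k, the vertex value is controlled by the L²-norm over the simplex: g(x_k)² ≤ ((d+1)(d+2) / |τ|) · ∫_τ g(x)² dx. -/

import Mathlib

open MeasureTheory

/-!
Sending one vertex `bᵢ` of a simplex to the midpoint of an edge `bᵢbⱼ`, and fixing the other
vertices, maps the simplex onto one of the two halves into which that midpoint bisects it. Both
halving maps have determinant `1/2`, so the integral of `f` over the simplex is the mean of the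
integrals of its two pullbacks. In barycentric coordinates `λ`, the pullbacks of `λᵢ(λᵢ - λⱼ)` add
up to `λᵢ²`, whence `∫ λᵢ² = 2 ∫ λᵢλⱼ`. Together with `∑ λᵢ = 1` this determines all second moments,
and expanding `‖g‖²` in the vertex values of an affine map `g` on a simplex with `n` vertices gives
`∫ ‖g‖² = (|τ| / (n(n+1))) (‖∑ g(bᵢ)‖² + ∑ ‖g(bᵢ)‖²)`.
-/

theorem affineMap_eq_sum_coord_smul {ι k V P W : Type*} [Fintype ι] [Ring k] [AddCommGroup V]
    [Module k V] [AddTorsor V P] [AddCommGroup W] [Module k W]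
    (b : AffineBasis ι k P) (g : P →ᵃ[k] W) (y : P) : g y = ∑ i, b.coord i y • g (b i) := by
  have hsum := b.sum_coord_apply_eq_one y
  conv_lhs => rw [← b.affineCombination_coord_eq_self y, Finset.map_affineCombination _ _ _ hsum,
    Finset.affineCombination_eq_linear_combination _ _ _ hsum]
  rfl

section MoveVertex

variable {ι k V : Type*} [CommRing k] [AddCommGroup V] [Module k V]

/-- The affine map sending the vertex `b i` of an affine basis to `p` and fixing every other vertex
of `b`, encoded as the displacement of each point by its `i`-th barycentric coordinate times
`p - b i`. Its linear part is thus a transvection; with `p` the midpoint of an edge at `b i`, it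
maps the simplex spanned by `b` onto one half of it. -/
noncomputable def moveVertex (b : AffineBasis ι k V) (i : ι) (p : V) : V →ᵃ[k] V :=
  AffineMap.id k V + (LinearMap.toSpanSingleton k V (p - b i)).toAffineMap.comp (b.coord i)

theorem moveVertex_apply (b : AffineBasis ι k V) (i : ι) (p y : V) :
    moveVertex b i p y = b.coord i y • (p - b i) + y :=
  add_comm _ _

theorem coord_moveVertex (b : AffineBasis ι k V) (i l : ι) (p y : V) :
    b.coord l (moveVertex b i p y) =
      b.coord l y + b.coord i y * (b.coord l p - b.coord l (b i)) := by
  rw [moveVertex_apply, ← vadd_eq_add, AffineMap.map_vadd, map_smul, ← vsub_eq_sub,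
    AffineMap.linearMap_vsub, vsub_eq_sub, vadd_eq_add, smul_eq_mul, add_comm]

theorem det_linear_moveVertex [Module.Free k V] [Module.Finite k V] (b : AffineBasis ι k V)
    (i : ι) (p : V) : (moveVertex b i p).linear.det = b.coord i p := by
  have hlinear : (moveVertex b i p).linear =
      LinearMap.transvection (b.coord i).linear (p - b i) := by
    ext y
    simp [moveVertex, LinearMap.transvection.apply]
  rw [hlinear, LinearMap.transvection.det, ← vsub_eq_sub, AffineMap.linearMap_vsub,
    b.coord_apply_eq, vsub_eq_sub, add_sub_cancel]

end MoveVertex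

section Bisection

variable {ι E : Type*} [AddCommGroup E] [Module ℝ E]

theorem coord_midpoint_left (b : AffineBasis ι ℝ E) {i j : ι} (hij : i ≠ j) :
    b.coord i (midpoint ℝ (b i) (b j)) = 1 / 2 := by
  rw [AffineMap.map_midpoint, b.coord_apply_eq, b.coord_apply_ne hij, midpoint_eq_smul_add]
  norm_num

theorem coord_midpoint_right (b : AffineBasis ι ℝ E) {i j : ι} (hij : i ≠ j) :
    b.coord j (midpoint ℝ (b i) (b j)) = 1 / 2 := by
  rw [midpoint_comm, coord_midpoint_left b hij.symm]

theorem coord_moveVertex_midpoint_self (b : AffineBasis ι ℝ E) {i j : ι} (hij : i ≠ j) (y : E) :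
    b.coord i (moveVertex b i (midpoint ℝ (b i) (b j)) y) = b.coord i y / 2 := by
  rw [coord_moveVertex, coord_midpoint_left b hij, b.coord_apply_eq]
  ring

theorem coord_moveVertex_midpoint_other (b : AffineBasis ι ℝ E) {i j : ι} (hij : i ≠ j) (y : E) :
    b.coord j (moveVertex b i (midpoint ℝ (b i) (b j)) y) = b.coord j y + b.coord i y / 2 := by
  rw [coord_moveVertex, coord_midpoint_right b hij, b.coord_apply_ne hij.symm]
  ring

theorem coord_moveVertex_midpoint_of_ne (b : AffineBasis ι ℝ E) {i j l : ι} (hli : l ≠ i)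
    (hlj : l ≠ j) (y : E) :
    b.coord l (moveVertex b i (midpoint ℝ (b i) (b j)) y) = b.coord l y := by
  rw [coord_moveVertex, AffineMap.map_midpoint, b.coord_apply_ne hli, b.coord_apply_ne hlj,
    midpoint_self, sub_self, mul_zero, add_zero]

theorem preimage_moveVertex_midpoint (b : AffineBasis ι ℝ E) {i j : ι} (hij : i ≠ j) :
    moveVertex b i (midpoint ℝ (b i) (b j)) ⁻¹'
        (convexHull ℝ (Set.range b) ∩ {y | b.coord i y ≤ b.coord j y}) =
      convexHull ℝ (Set.range b) := by
  ext y
  simp only [b.convexHull_eq_nonneg_coord, Set.mem_preimage, Set.mem_inter_iff, Set.mem_ofPred_eq,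
    coord_moveVertex_midpoint_self b hij, coord_moveVertex_midpoint_other b hij]
  constructor
  · rintro ⟨hnonneg, hle⟩ l
    by_cases hli : l = i
    · have := hnonneg i
      rw [coord_moveVertex_midpoint_self b hij] at this
      rw [hli]
      linarith
    by_cases hlj : l = j
    · rw [hlj]
      linarith
    · simpa only [coord_moveVertex_midpoint_of_ne b hli hlj] using hnonneg l
  · refine fun hnonneg => ⟨fun l => ?_, by linarith [hnonneg j]⟩
    by_cases hli : l = i
    · rw [hli, coord_moveVertex_midpoint_self b hij]
      linarith [hnonneg i]
    by_cases hlj : l = j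
    · rw [hlj, coord_moveVertex_midpoint_other b hij]
      linarith [hnonneg i, hnonneg j]
    · rw [coord_moveVertex_midpoint_of_ne b hli hlj]
      exact hnonneg l

end Bisection

section AddHaar

variable {E : Type*} [NormedAddCommGroup E] [NormedSpace ℝ E] [FiniteDimensional ℝ E]
  [MeasurableSpace E] [BorelSpace E] (μ : Measure E) [μ.IsAddHaarMeasure]

theorem map_affineMap_addHaar_eq_smul_addHaar {φ : E →ᵃ[ℝ] E} (hφ : φ.linear.det ≠ 0) :
    μ.map φ = ENNReal.ofReal |φ.linear.det⁻¹| • μ := by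
  have hdecomp : ⇑φ = (· + φ 0) ∘ φ.linear := φ.decomp
  rw [hdecomp, ← Measure.map_map (measurable_add_const _)
      φ.linear.continuous_of_finiteDimensional.measurable,
    Measure.map_linearMap_addHaar_eq_smul_addHaar μ hφ, Measure.map_smul,
    map_add_right_eq_self]

theorem addHaar_setOf_affineMap_eq {F : Type*} [AddCommGroup F] [Module ℝ F] {g h : E →ᵃ[ℝ] F}
    (hgh : g ≠ h) : μ {y | g y = h y} = 0 := by
  let A : AffineSubspace ℝ E := (AffineSubspace.mk' 0 ⊥).comap (g - h)
  have hA : (A : Set E) = {y | g y = h y} := by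
    ext y
    simp [A, AffineSubspace.mem_mk', sub_eq_zero]
  rw [← hA]
  refine Measure.addHaar_affineSubspace μ A fun htop => hgh (AffineMap.ext fun y => ?_)
  have hy : y ∈ (A : Set E) := htop ▸ Set.mem_univ y
  rwa [hA] at hy

end AddHaar

theorem addHaar_real_convexHull_range_pos {ι E : Type*} [Finite ι] [NormedAddCommGroup E]
    [NormedSpace ℝ E] [MeasurableSpace E] (b : AffineBasis ι ℝ E) (μ : Measure E)
    [μ.IsAddHaarMeasure] : 0 < μ.real (convexHull ℝ (Set.range b)) := by
  have := b.finiteDimensional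
  have hinterior : (interior (convexHull ℝ (Set.range b))).Nonempty :=
    interior_convexHull_nonempty_iff_affineSpan_eq_top.2 b.tot
  exact ENNReal.toReal_pos (Measure.measure_pos_of_nonempty_interior μ hinterior).ne'
    ((Set.finite_range b).isCompact_convexHull ℝ).measure_ne_top

section Integral

variable {ι E F : Type*} [NormedAddCommGroup E] [NormedSpace ℝ E]
  [MeasurableSpace E] [BorelSpace E] (b : AffineBasis ι ℝ E) (μ : Measure E) [μ.IsAddHaarMeasure]

section Finite

variable [Finite ι]

theorem setIntegral_comp_moveVertex_midpoint [NormedAddCommGroup F] [NormedSpace ℝ F] {i j : ι}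
    (hij : i ≠ j) {f : E → F} (hf : AEStronglyMeasurable f μ) :
    ∫ y in convexHull ℝ (Set.range b), f (moveVertex b i (midpoint ℝ (b i) (b j)) y) ∂μ =
      (2 : ℝ) • ∫ y in convexHull ℝ (Set.range b) ∩ {y | b.coord i y ≤ b.coord j y}, f y ∂μ := by
  have := b.finiteDimensional
  set T := moveVertex b i (midpoint ℝ (b i) (b j))
  have hdet : T.linear.det = 1 / 2 := by
    rw [det_linear_moveVertex, coord_midpoint_left b hij]
  have hmap : μ.map T = ENNReal.ofReal 2 • μ := by
    rw [map_affineMap_addHaar_eq_smul_addHaar μ (by rw [hdet]; norm_num), hdet]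
    norm_num
  have hmeas : MeasurableSet (convexHull ℝ (Set.range b) ∩ {y | b.coord i y ≤ b.coord j y}) :=
    ((Set.finite_range b).isClosed_convexHull ℝ).measurableSet.inter
      (isClosed_le (continuous_barycentric_coord b i)
        (continuous_barycentric_coord b j)).measurableSet
  calc
    _ = ∫ y in T ⁻¹' (convexHull ℝ (Set.range b) ∩ {y | b.coord i y ≤ b.coord j y}),
          f (T y) ∂μ := by
      rw [preimage_moveVertex_midpoint b hij]
    _ = _ := by
      rw [← setIntegral_map hmeas (hmap ▸ hf.smul_measure _)
          T.continuous_of_finiteDimensional.aemeasurable, hmap, Measure.restrict_smul,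
        integral_smul_measure, ENNReal.toReal_ofReal zero_le_two]

theorem setIntegral_convexHull_eq_add_setIntegral_coord_le [NormedAddCommGroup F] [NormedSpace ℝ F]
    {i j : ι} (hij : i ≠ j) {f : E → F} (hf : IntegrableOn f (convexHull ℝ (Set.range b)) μ) :
    ∫ y in convexHull ℝ (Set.range b), f y ∂μ =
      ∫ y in convexHull ℝ (Set.range b) ∩ {y | b.coord i y ≤ b.coord j y}, f y ∂μ +
        ∫ y in convexHull ℝ (Set.range b) ∩ {y | b.coord j y ≤ b.coord i y}, f y ∂μ := by
  have := b.finiteDimensional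
  have hmeas : NullMeasurableSet
      (convexHull ℝ (Set.range b) ∩ {y | b.coord j y ≤ b.coord i y}) μ :=
    (((Set.finite_range b).isClosed_convexHull ℝ).inter
      (isClosed_le (continuous_barycentric_coord b j)
        (continuous_barycentric_coord b i))).measurableSet.nullMeasurableSet
  have hcoord : b.coord i ≠ b.coord j := fun h => by
    simpa [b.coord_apply_ne hij.symm] using congrArg (· (b i)) h
  have hcover : convexHull ℝ (Set.range b) ⊆
      {y | b.coord i y ≤ b.coord j y} ∪ {y | b.coord j y ≤ b.coord i y} :=
    fun y _ => le_total (b.coord i y) (b.coord j y)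
  have hdisj : AEDisjoint μ (convexHull ℝ (Set.range b) ∩ {y | b.coord i y ≤ b.coord j y})
      (convexHull ℝ (Set.range b) ∩ {y | b.coord j y ≤ b.coord i y}) :=
    measure_mono_null (fun y hy => le_antisymm hy.1.2 hy.2.2) (addHaar_setOf_affineMap_eq μ hcoord)
  rw [← setIntegral_union₀ hdisj hmeas (hf.mono_set Set.inter_subset_left)
    (hf.mono_set Set.inter_subset_left), ← Set.inter_union_distrib_left,
    Set.inter_eq_left.2 hcover]

theorem two_smul_setIntegral_convexHull_eq_add_moveVertex [NormedAddCommGroup F]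
    [NormedSpace ℝ F] {i j : ι} (hij : i ≠ j) {f : E → F} (hf : LocallyIntegrable f μ) :
    (2 : ℝ) • ∫ y in convexHull ℝ (Set.range b), f y ∂μ =
      ∫ y in convexHull ℝ (Set.range b), f (moveVertex b i (midpoint ℝ (b i) (b j)) y) ∂μ +
        ∫ y in convexHull ℝ (Set.range b), f (moveVertex b j (midpoint ℝ (b j) (b i)) y) ∂μ := by
  have := b.finiteDimensional
  rw [setIntegral_comp_moveVertex_midpoint b μ hij hf.aestronglyMeasurable,
    setIntegral_comp_moveVertex_midpoint b μ hij.symm hf.aestronglyMeasurable, ← smul_add,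
    setIntegral_convexHull_eq_add_setIntegral_coord_le b μ hij
      (hf.integrableOn_isCompact ((Set.finite_range b).isCompact_convexHull ℝ))]

theorem integrableOn_convexHull_coord_mul_coord (i j : ι) :
    IntegrableOn (fun y => b.coord i y * b.coord j y) (convexHull ℝ (Set.range b)) μ :=
  have := b.finiteDimensional
  ((continuous_barycentric_coord b i).mul
    (continuous_barycentric_coord b j)).continuousOn.integrableOn_compact
    ((Set.finite_range b).isCompact_convexHull ℝ)

theorem setIntegral_coord_mul_self_eq_two_mul {i j : ι} (hij : i ≠ j) :
    ∫ y in convexHull ℝ (Set.range b), b.coord i y * b.coord i y ∂μ =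
      2 * ∫ y in convexHull ℝ (Set.range b), b.coord i y * b.coord j y ∂μ := by
  have := b.finiteDimensional
  have hi := continuous_barycentric_coord b i
  have hj := continuous_barycentric_coord b j
  have hint {f : E → ℝ} (hf : Continuous f) : IntegrableOn f (convexHull ℝ (Set.range b)) μ :=
    hf.continuousOn.integrableOn_compact ((Set.finite_range b).isCompact_convexHull ℝ)
  have hbisect := two_smul_setIntegral_convexHull_eq_add_moveVertex b μ hij
    (f := fun y => b.coord i y * (b.coord i y - b.coord j y))
    (hi.mul (hi.sub hj)).locallyIntegrable
  simp only [coord_moveVertex_midpoint_self b hij, coord_moveVertex_midpoint_other b hij,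
    coord_moveVertex_midpoint_self b hij.symm, coord_moveVertex_midpoint_other b hij.symm]
    at hbisect
  rw [← integral_add (hint (by fun_prop)) (hint (by fun_prop))] at hbisect
  have hpullbacks (y : E) :
      b.coord i y / 2 * (b.coord i y / 2 - (b.coord j y + b.coord i y / 2)) +
        (b.coord i y + b.coord j y / 2) * (b.coord i y + b.coord j y / 2 - b.coord j y / 2) =
      b.coord i y * b.coord i y := by ring
  simp only [hpullbacks] at hbisect
  simp only [mul_sub, smul_eq_mul] at hbisect
  rw [integral_sub (integrableOn_convexHull_coord_mul_coord b μ i i)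
    (integrableOn_convexHull_coord_mul_coord b μ i j)] at hbisect
  linarith

theorem setIntegral_coord_mul_self_eq (i j : ι) :
    ∫ y in convexHull ℝ (Set.range b), b.coord i y * b.coord i y ∂μ =
      ∫ y in convexHull ℝ (Set.range b), b.coord j y * b.coord j y ∂μ := by
  obtain rfl | hij := eq_or_ne i j
  · rfl
  · simp_rw [setIntegral_coord_mul_self_eq_two_mul b μ hij,
      setIntegral_coord_mul_self_eq_two_mul b μ hij.symm, mul_comm (b.coord i _)]

end Finite

section Fintype

variable [Fintype ι]

theorem sum_sum_setIntegral_coord_mul_coord :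
    ∑ i, ∑ j, ∫ y in convexHull ℝ (Set.range b), b.coord i y * b.coord j y ∂μ =
      μ.real (convexHull ℝ (Set.range b)) := by
  have hint := integrableOn_convexHull_coord_mul_coord b μ
  calc
    _ = ∫ y in convexHull ℝ (Set.range b), ∑ i, ∑ j, b.coord i y * b.coord j y ∂μ := by
      simp_rw [integral_finsetSum _ fun i _ => integrable_finsetSum _ fun j _ => hint i j,
        integral_finsetSum _ fun j _ => hint _ j]
    _ = ∫ _ in convexHull ℝ (Set.range b), (1 : ℝ) ∂μ := by
      simp_rw [← Finset.mul_sum, b.sum_coord_apply_eq_one, mul_one, b.sum_coord_apply_eq_one]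
    _ = μ.real (convexHull ℝ (Set.range b)) := by simp

theorem setIntegral_coord_mul_coord [DecidableEq ι] (i j : ι) :
    ∫ y in convexHull ℝ (Set.range b), b.coord i y * b.coord j y ∂μ =
      μ.real (convexHull ℝ (Set.range b)) / (Fintype.card ι * (Fintype.card ι + 1)) *
        (1 + if i = j then 1 else 0) := by
  obtain ⟨c, hc⟩ : ∃ c : ℝ, ∀ k l, ∫ y in convexHull ℝ (Set.range b),
      b.coord k y * b.coord l y ∂μ = c * (1 + if k = l then 1 else 0) := by
    refine ⟨(∫ y in convexHull ℝ (Set.range b), b.coord i y * b.coord i y ∂μ) / 2, fun k l => ?_⟩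
    rw [setIntegral_coord_mul_self_eq b μ i k]
    obtain rfl | hkl := eq_or_ne k l
    · rw [if_pos rfl]
      ring
    · rw [if_neg hkl, setIntegral_coord_mul_self_eq_two_mul b μ hkl]
      ring
  have hsum : c * (Fintype.card ι * (Fintype.card ι + 1)) =
      μ.real (convexHull ℝ (Set.range b)) := by
    simp only [← sum_sum_setIntegral_coord_mul_coord b μ, hc, ← Finset.mul_sum,
      Finset.sum_add_distrib, Finset.sum_ite_eq, Finset.mem_univ, if_true, Finset.sum_const,
      Finset.card_univ, nsmul_eq_mul, mul_one]
    ring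
  have : Nonempty ι := ⟨i⟩
  rw [hc, ← hsum, mul_div_cancel_right₀ _ (by positivity)]

variable [NormedAddCommGroup F] [InnerProductSpace ℝ F]

theorem setIntegral_norm_affineMap_sq (g : E →ᵃ[ℝ] F) :
    ∫ y in convexHull ℝ (Set.range b), ‖g y‖ ^ 2 ∂μ =
      μ.real (convexHull ℝ (Set.range b)) / (Fintype.card ι * (Fintype.card ι + 1)) *
        (‖∑ i, g (b i)‖ ^ 2 + ∑ i, ‖g (b i)‖ ^ 2) := by
  classical
  have hexpand (y : E) : ‖g y‖ ^ 2 =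
      ∑ i, ∑ j, b.coord i y * b.coord j y * inner ℝ (g (b i)) (g (b j)) := by
    simp_rw [affineMap_eq_sum_coord_smul b g y, ← real_inner_self_eq_norm_sq, sum_inner, inner_sum,
      real_inner_smul_left, real_inner_smul_right, mul_assoc]
  have hint (i j : ι) := (integrableOn_convexHull_coord_mul_coord b μ i j).mul_const
    (inner ℝ (g (b i)) (g (b j)))
  calc
    _ = ∑ i, ∑ j, (∫ y in convexHull ℝ (Set.range b), b.coord i y * b.coord j y ∂μ) *
          inner ℝ (g (b i)) (g (b j)) := by
      simp_rw [hexpand, integral_finsetSum _ fun i _ => integrable_finsetSum _ fun j _ => hint i j,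
        integral_finsetSum _ fun j _ => hint _ j, integral_mul_const]
    _ = μ.real (convexHull ℝ (Set.range b)) / (Fintype.card ι * (Fintype.card ι + 1)) *
          ∑ i, ∑ j, (1 + if i = j then 1 else 0) * inner ℝ (g (b i)) (g (b j)) := by
      simp_rw [setIntegral_coord_mul_coord, mul_assoc, Finset.mul_sum]
    _ = _ := by
      simp_rw [add_mul, one_mul, ite_mul, one_mul, zero_mul, Finset.sum_add_distrib,
        Finset.sum_ite_eq, Finset.mem_univ, if_true, ← inner_sum, ← sum_inner,
        real_inner_self_eq_norm_sq]

theorem vertex_value_L2_bound_general (g : E →ᵃ[ℝ] F) (k : ι) :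
    ‖g (b k)‖ ^ 2 ≤
      Fintype.card ι * (Fintype.card ι + 1) / μ.real (convexHull ℝ (Set.range b)) *
        ∫ y in convexHull ℝ (Set.range b), ‖g y‖ ^ 2 ∂μ := by
  have hvol := addHaar_real_convexHull_range_pos b μ
  have : Nonempty ι := ⟨k⟩
  calc
    ‖g (b k)‖ ^ 2 ≤ ∑ i, ‖g (b i)‖ ^ 2 :=
      Finset.single_le_sum (f := fun i => ‖g (b i)‖ ^ 2) (fun _ _ => sq_nonneg _)
        (Finset.mem_univ k)
    _ ≤ ‖∑ i, g (b i)‖ ^ 2 + ∑ i, ‖g (b i)‖ ^ 2 := le_add_of_nonneg_left (sq_nonneg _)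
    _ = _ := by
      rw [setIntegral_norm_affineMap_sq b μ g]
      field_simp

end Fintype

end Integral

/-- On a nondegenerate `d`-simplex `τ` of positive volume in `ℝ^d`,
the value of an affine function at a vertex is controlled by its `L²`-norm over
the simplex: `g(x_k)² ≤ ((d+1)(d+2)/|τ|) · ∫_τ g²`. -/
theorem vertex_value_L2_bound
    (d : ℕ) (hd : 1 ≤ d)
    (x : Fin (d + 1) → EuclideanSpace ℝ (Fin d))
    (hx : AffineIndependent ℝ x)
    (τ : Set (EuclideanSpace ℝ (Fin d)))
    (hτ : τ = convexHull ℝ (Set.range x))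
    (hvol : 0 < (volume τ).toReal)
    (g : EuclideanSpace ℝ (Fin d) →ᵃ[ℝ] ℝ)
    (k : Fin (d + 1)) :
    (g (x k)) ^ 2 ≤
      (((d : ℝ) + 1) * ((d : ℝ) + 2) / (volume τ).toReal) * ∫ y in τ, (g y) ^ 2 := by
  subst hτ
  obtain ⟨b, rfl⟩ : ∃ b : AffineBasis (Fin (d + 1)) ℝ (EuclideanSpace ℝ (Fin d)), ⇑b = x :=
    ⟨⟨x, hx, hx.affineSpan_eq_top_iff_card_eq_finrank_add_one.2 (by simp)⟩, rfl⟩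
  simpa [Measure.real, add_assoc, one_add_one_eq_two] using
    vertex_value_L2_bound_general b volume g k
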